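/- Let R be a commutative Noetherian ring and M an R-module admitting a resolution ⋯ → F_1 → F_0 → M → 0 in which every F_i is flat and Matlis reflexive. Then every module appearing in the minimal flat resolution of M is Matlis reflexive. -/

import Mathlib

universe u

variable (R : Type u) [CommRing R]

/-- A morphism `f : F → M` with `F` flat is a flat precover if every morphism from a
flat module to `M` factors through `f`. -/
def IsFlatPrecover {F M : Type u} [AddCommGroup F] [AddCommGroup M] [Module R F]
    [Module R M] (f : F →ₗ[R] M) : Prop :=
  Module.Flat R F ∧
    ∀ (F' : Type u) [AddCommGroup F'] [Module R F'], Module.Flat R F' →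
      ∀ g : F' →ₗ[R] M, ∃ h : F' →ₗ[R] F, f ∘ₗ h = g

/-- A flat precover `f : F → M` is a flat cover if every `h : F → F` with `f ∘ h = f`
is an automorphism. -/
def IsFlatCover {F M : Type u} [AddCommGroup F] [AddCommGroup M] [Module R F]
    [Module R M] (f : F →ₗ[R] M) : Prop :=
  IsFlatPrecover R f ∧ ∀ h : F →ₗ[R] F, f ∘ₗ h = f → Function.Bijective h

/-- A morphism `i : M → E` is an injective envelope if `E` is injective, `i` is
injective, and the image of `i` is an essential submodule of `E`. -/
def IsInjectiveEnvelope {M E : Type u} [AddCommGroup M] [AddCommGroup E] [Module R M]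
    [Module R E] (i : M →ₗ[R] E) : Prop :=
  Module.Injective R E ∧ Function.Injective i ∧
    ∀ N : Submodule R E, N ≠ ⊥ → N ⊓ LinearMap.range i ≠ ⊥

/-- An injective cogenerator is an injective module `E` such that `Hom(N, E) ≠ 0`
for every nonzero module `N`. -/
def IsInjectiveCogenerator (E : Type u) [AddCommGroup E] [Module R E] : Prop :=
  Module.Injective R E ∧
    ∀ (N : Type u) [AddCommGroup N] [Module R N], (∃ x : N, x ≠ 0) →
      ∃ g : N →ₗ[R] E, g ≠ 0

/-- `0 → M → I⁰ → I¹ → ⋯` is a minimal injective resolution if it is an injective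
resolution in which each map from the image of a differential into the next term is an
injective envelope. -/
def IsMinimalInjectiveResolution (M : Type u) [AddCommGroup M] [Module R M]
    (I : ℕ → Type u) [∀ n, AddCommGroup (I n)] [∀ n, Module R (I n)]
    (ι : M →ₗ[R] I 0) (d : ∀ n, I n →ₗ[R] I (n + 1)) : Prop :=
  (∀ n, Module.Injective R (I n)) ∧ Function.Injective ι ∧
    LinearMap.range ι = LinearMap.ker (d 0) ∧
    (∀ n, LinearMap.range (d n) = LinearMap.ker (d (n + 1))) ∧
    IsInjectiveEnvelope R (LinearMap.range ι).subtype ∧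
    ∀ n, IsInjectiveEnvelope R (LinearMap.range (d n)).subtype

/-- `⋯ → F₁ → F₀ → M → 0` is a minimal flat resolution if it is a resolution such
that each induced map `Fᵢ → im dᵢ` is a flat cover. -/
def IsMinimalFlatResolution (M : Type u) [AddCommGroup M] [Module R M]
    (F : ℕ → Type u) [∀ n, AddCommGroup (F n)] [∀ n, Module R (F n)]
    (π : F 0 →ₗ[R] M) (d : ∀ n, F (n + 1) →ₗ[R] F n) : Prop :=
  Function.Surjective π ∧
    LinearMap.range (d 0) = LinearMap.ker π ∧
    (∀ n, LinearMap.range (d (n + 1)) = LinearMap.ker (d n)) ∧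
    IsFlatCover R π ∧
    ∀ n, IsFlatCover R (d n).rangeRestrict

/-- Given a module `D` (to be thought of as `⊕ E(R/𝔫)`, the direct sum of injective
envelopes of the residue fields of all maximal ideals, so that `Hom_R(-, D)` is the
Matlis dual), a module `M` is Matlis reflexive if the evaluation map
`M → Hom_R(Hom_R(M, D), D)` is an isomorphism. -/
def IsMatlisReflexive (D : Type u) [AddCommGroup D] [Module R D]
    (M : Type u) [AddCommGroup M] [Module R M] : Prop :=
  Function.Bijective (LinearMap.applyₗ : M →ₗ[R] ((M →ₗ[R] D) →ₗ[R] D))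

open DirectSum

theorem aux_directSum_injective [IsNoetherianRing R] {ι : Type u}
    (E : ι → Type u) [∀ i, AddCommGroup (E i)] [∀ i, Module R (E i)]
    (hE : ∀ i, Module.Injective R (E i)) : Module.Injective R (⨁ i, E i) := by
  classical
  apply Module.Baer.injective
  intro I g
  obtain ⟨S, hS⟩ := (isNoetherian_def.mp (inferInstance : IsNoetherian R I)) ⊤
  have hx : ∀ i, ∃ x : E i, (∀ (r : R) (hr : r ∈ I), g ⟨r, hr⟩ i = r • x) ∧
      ((∀ s : I, g s i = 0) → x = 0) := by
    intro i
    by_cases h0 : ∀ s : I, g s i = 0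
    · exact ⟨0, fun r hr => by simp [h0], fun _ => rfl⟩
    · obtain ⟨k, hk⟩ := Module.Baer.of_injective (hE i) I
        (DirectSum.component R ι E i ∘ₗ g)
      refine ⟨k 1, fun r hr => ?_, fun h => absurd h h0⟩
      rw [← map_smul, smul_eq_mul, mul_one, hk r hr]
      rfl
  choose x hx1 hx2 using hx
  have hsupp : ∀ i, i ∉ S.biUnion (fun s => DFinsupp.support (g s)) → x i = 0 := by
    intro i hi
    apply hx2
    intro s
    have hle : (⊤ : Submodule R I) ≤ LinearMap.ker (DirectSum.component R ι E i ∘ₗ g) := by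
      rw [← hS, Submodule.span_le]
      intro t ht
      by_contra hne
      apply hi
      rw [Finset.mem_biUnion]
      exact ⟨t, ht, DFinsupp.mem_support_iff.mpr hne⟩
    exact hle (Submodule.mem_top (x := s))
  let y : ⨁ i, E i := DFinsupp.mk (S.biUnion (fun s => DFinsupp.support (g s))) (fun i => x i)
  have hy : ∀ i, y i = x i := by
    intro i
    change (DFinsupp.mk _ _ : Π₀ i, E i) i = x i
    rw [DFinsupp.mk_apply]
    split_ifs with h
    · rfl
    · exact (hsupp i h).symm
  refine ⟨LinearMap.toSpanSingleton R _ y, fun r hr => ?_⟩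
  refine DFinsupp.ext fun i => ?_
  rw [hx1 i r hr, LinearMap.toSpanSingleton_apply, ← hy i]
  rfl

section aux

variable {R}
variable {D : Type u} [AddCommGroup D] [Module R D]

theorem aux_coker (hD : Module.Injective R D) {F₁ F N : Type u}
    [AddCommGroup F₁] [Module R F₁] [AddCommGroup F] [Module R F] [AddCommGroup N] [Module R N]
    (d : F₁ →ₗ[R] F) (f : F →ₗ[R] N) (hf : Function.Surjective f)
    (hdf : LinearMap.range d = LinearMap.ker f)
    (h₁ : IsMatlisReflexive R D F₁) (h₀ : IsMatlisReflexive R D F) (x : N)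
    (hx : ∀ ξ : N →ₗ[R] D, ξ x = 0) : x = 0 := by
  obtain ⟨y, rfl⟩ := hf x
  have hy : ∀ η : F →ₗ[R] D, η ∘ₗ d = 0 → η y = 0 := by
    intro η hη
    have hk : LinearMap.ker f ≤ LinearMap.ker η := by
      rw [← hdf]
      rintro _ ⟨z, rfl⟩
      exact LinearMap.congr_fun hη z
    have := hx ((LinearMap.ker f).liftQ η hk ∘ₗ
      (f.quotKerEquivOfSurjective hf).symm.toLinearMap)
    have e : (f.quotKerEquivOfSurjective hf).symm (f y) = (LinearMap.ker f).mkQ y := by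
      rw [LinearEquiv.symm_apply_eq]; rfl
    simpa [e] using this
  let ds : (F →ₗ[R] D) →ₗ[R] (F₁ →ₗ[R] D) := LinearMap.lcomp R D d
  let ey : (F →ₗ[R] D) →ₗ[R] D := LinearMap.applyₗ y
  have hk : LinearMap.ker ds ≤ LinearMap.ker ey := fun η hη => hy η hη
  obtain ⟨ω, hω⟩ := hD.out ((LinearMap.ker ds).liftQ ds le_rfl)
    (LinearMap.ker_eq_bot.mp (Submodule.ker_liftQ_eq_bot _ _ _ le_rfl))
    ((LinearMap.ker ds).liftQ ey hk)
  obtain ⟨z, hz⟩ := h₁.2 ω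
  have : y = d z := by
    apply h₀.1
    ext η
    have h1 := hω ((LinearMap.ker ds).mkQ η)
    simp only [Submodule.mkQ_apply, Submodule.liftQ_apply] at h1
    rw [← hz] at h1
    exact h1.symm
  have hm : d z ∈ LinearMap.ker f := hdf ▸ LinearMap.mem_range_self d z
  rw [this]
  exact hm

open TensorProduct in
theorem aux_precover (hD : Module.Injective R D) {F' F N : Type u}
    [AddCommGroup F'] [Module R F'] [AddCommGroup F] [Module R F] [AddCommGroup N] [Module R N]
    (f : F →ₗ[R] N) (hf : Function.Surjective f)
    (h₀ : IsMatlisReflexive R D F) (hN : ∀ x : N, (∀ ξ : N →ₗ[R] D, ξ x = 0) → x = 0)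
    (hF' : Module.Flat R F') (g : F' →ₗ[R] N) : ∃ h : F' →ₗ[R] F, f ∘ₗ h = g := by
  let fs : (N →ₗ[R] D) →ₗ[R] (F →ₗ[R] D) := LinearMap.lcomp R D f
  have hfs : Function.Injective fs := by
    intro a b hab
    ext x
    obtain ⟨y, rfl⟩ := hf x
    exact LinearMap.congr_fun hab y
  let φ : F' ⊗[R] (N →ₗ[R] D) →ₗ[R] D := TensorProduct.lift (LinearMap.applyₗ ∘ₗ g)
  obtain ⟨ψ, hψ⟩ := hD.out (fs.lTensor F')
    (Module.Flat.lTensor_preserves_injective_linearMap fs hfs) φ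
  let ev : F ≃ₗ[R] ((F →ₗ[R] D) →ₗ[R] D) := LinearEquiv.ofBijective _ h₀
  refine ⟨ev.symm.toLinearMap ∘ₗ TensorProduct.curry ψ, ?_⟩
  ext x
  rw [← sub_eq_zero]
  apply hN
  intro ξ
  rw [map_sub, sub_eq_zero]
  have h1 : ev (ev.symm (TensorProduct.curry ψ x)) = TensorProduct.curry ψ x :=
    ev.apply_symm_apply _
  have h2 := LinearMap.congr_fun h1 (ξ ∘ₗ f)
  have h3 := hψ (x ⊗ₜ ξ)
  exact h2.trans h3

theorem aux_retract {F G : Type u}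
    [AddCommGroup F] [Module R F] [AddCommGroup G] [Module R G]
    (S : G →ₗ[R] F) (T : F →ₗ[R] G) (hTS : Function.Bijective (T ∘ₗ S))
    (h : IsMatlisReflexive R D F) : IsMatlisReflexive R D G := by
  constructor
  · intro a b hab
    apply hTS.1
    have : S a = S b := by
      apply h.1
      ext η
      exact LinearMap.congr_fun hab (η ∘ₗ S)
    simp [this]
  · intro ω
    obtain ⟨y, hy⟩ := h.2 (ω ∘ₗ LinearMap.lcomp R D S)
    let a : G ≃ₗ[R] G := LinearEquiv.ofBijective _ hTS
    refine ⟨a.symm (T y), ?_⟩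
    ext ξ
    have h1 := LinearMap.congr_fun hy (ξ ∘ₗ a.symm.toLinearMap ∘ₗ T)
    refine h1.trans (congrArg ω ?_)
    ext x
    exact congrArg ξ (a.symm_apply_apply x)

theorem aux_step (hD : Module.Injective R D) {F G N N' : Type u}
    [AddCommGroup F] [Module R F] [AddCommGroup G] [Module R G]
    [AddCommGroup N] [Module R N] [AddCommGroup N'] [Module R N']
    (f : F →ₗ[R] N) (hf : Function.Surjective f) (hF : Module.Flat R F)
    (h₀ : IsMatlisReflexive R D F) (hN : ∀ x : N, (∀ ξ : N →ₗ[R] D, ξ x = 0) → x = 0)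
    (g : G →ₗ[R] N') (hg : IsFlatCover R g)
    (s : N' →ₗ[R] N) (r : N →ₗ[R] N') (hrs : Function.Bijective (r ∘ₗ s))
    (K : Submodule R F) (hK : K = LinearMap.ker f)
    (K' : Submodule R G) (hK' : K' = LinearMap.ker g) :
    IsMatlisReflexive R D G ∧
      ∃ (s' : K' →ₗ[R] K) (r' : K →ₗ[R] K'), Function.Bijective (r' ∘ₗ s') := by
  subst hK hK'
  obtain ⟨S, hS⟩ := aux_precover hD f hf h₀ hN hg.1.1 (s ∘ₗ g)
  obtain ⟨T, hT⟩ := hg.1.2 F hF (r ∘ₗ f)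
  let a : N' ≃ₗ[R] N' := LinearEquiv.ofBijective _ hrs
  obtain ⟨b, hb⟩ := hg.1.2 G hg.1.1 (a.symm.toLinearMap ∘ₗ g)
  have hSx : ∀ x, f (S x) = s (g x) := fun x => LinearMap.congr_fun hS x
  have hTx : ∀ x, g (T x) = r (f x) := fun x => LinearMap.congr_fun hT x
  have hbx : ∀ x, g (b x) = a.symm (g x) := fun x => LinearMap.congr_fun hb x
  have hax : ∀ x, r (s x) = a x := fun x => rfl
  have h1 : Function.Bijective (b ∘ₗ (T ∘ₗ S)) := by
    apply hg.2
    ext x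
    simp [hSx, hTx, hbx, hax]
  have h2 : Function.Bijective ((T ∘ₗ S) ∘ₗ b) := by
    apply hg.2
    ext x
    simp [hSx, hTx, hbx, hax]
  have hTS : Function.Bijective (T ∘ₗ S) := by
    constructor
    · exact Function.Injective.of_comp (f := b) (by simpa using h1.1)
    · exact Function.Surjective.of_comp (g := b) (by simpa using h2.2)
  refine ⟨aux_retract S T hTS h₀, S.restrict ?_, T.restrict ?_, ?_, ?_⟩
  · intro x hx
    rw [LinearMap.mem_ker] at hx ⊢
    rw [hSx, hx, map_zero]
  · intro x hx
    rw [LinearMap.mem_ker] at hx ⊢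
    rw [hTx, hx, map_zero]
  · intro x y hxy
    apply Subtype.ext
    exact hTS.1 (congrArg Subtype.val hxy)
  · rintro ⟨x, hx⟩
    obtain ⟨y, hy⟩ := hTS.2 x
    refine ⟨⟨y, ?_⟩, Subtype.ext hy⟩
    rw [LinearMap.mem_ker] at hx ⊢
    rw [← hy, LinearMap.comp_apply, hTx, hSx, hax] at hx
    exact a.map_eq_zero_iff.mp hx

end aux

/-- Over a commutative Noetherian ring, if `M` admits a resolution
consisting of Matlis reflexive flat modules, then every module appearing in the
minimal flat resolution of `M` is Matlis reflexive.  Here the Matlis dualizing module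
`⊕ E(R/𝔫)` is presented by a family `En 𝔫` of injective envelopes
`j 𝔫 : R/𝔫 → En 𝔫` of the residue fields of the maximal ideals `𝔫` of `R`. -/
theorem minimalFlatResolution_matlisReflexive [IsNoetherianRing R]
    (En : MaximalSpectrum R → Type u) [∀ 𝔫, AddCommGroup (En 𝔫)] [∀ 𝔫, Module R (En 𝔫)]
    (j : ∀ 𝔫 : MaximalSpectrum R, (R ⧸ 𝔫.asIdeal) →ₗ[R] En 𝔫)
    (hj : ∀ 𝔫, IsInjectiveEnvelope R (j 𝔫))
    {M : Type u} [AddCommGroup M] [Module R M]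
    (h : ∃ (F : ℕ → Type u) (_ : ∀ n, AddCommGroup (F n)) (_ : ∀ n, Module R (F n))
        (π : F 0 →ₗ[R] M) (d : ∀ n, F (n + 1) →ₗ[R] F n),
        Function.Surjective π ∧
          LinearMap.range (d 0) = LinearMap.ker π ∧
          (∀ n, LinearMap.range (d (n + 1)) = LinearMap.ker (d n)) ∧
          (∀ n, Module.Flat R (F n)) ∧
          ∀ n, IsMatlisReflexive R (⨁ 𝔫, En 𝔫) (F n)) :
    ∀ (G : ℕ → Type u) (_ : ∀ n, AddCommGroup (G n)) (_ : ∀ n, Module R (G n))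
      (ρ : G 0 →ₗ[R] M) (e : ∀ n, G (n + 1) →ₗ[R] G n),
      IsMinimalFlatResolution R M G ρ e →
        ∀ n, IsMatlisReflexive R (⨁ 𝔫, En 𝔫) (G n) := by
  have hD : Module.Injective R (⨁ 𝔫, En 𝔫) := aux_directSum_injective R En fun 𝔫 => (hj 𝔫).1
  obtain ⟨F, _, _, π, d, hπ, hd0, hd, hflat, hrefl⟩ := h
  intro G _ _ ρ e hG
  obtain ⟨hρ, he0, he, hρc, hec⟩ := hG
  have h0 := aux_step hD π hπ (hflat 0) (hrefl 0)
    (aux_coker hD (d 0) π hπ hd0 (hrefl 1) (hrefl 0)) ρ hρc LinearMap.id LinearMap.id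
    Function.bijective_id _ hd0 _ he0
  have hs : ∀ n, ∀ (s : LinearMap.range (e n) →ₗ[R] LinearMap.range (d n))
      (r : LinearMap.range (d n) →ₗ[R] LinearMap.range (e n)), Function.Bijective (r ∘ₗ s) →
      IsMatlisReflexive R (⨁ 𝔫, En 𝔫) (G (n + 1)) ∧
      ∃ (s' : LinearMap.range (e (n + 1)) →ₗ[R] LinearMap.range (d (n + 1)))
        (r' : LinearMap.range (d (n + 1)) →ₗ[R] LinearMap.range (e (n + 1))),
        Function.Bijective (r' ∘ₗ s') := by
    intro n s r hrs
    have hk : LinearMap.range (d (n + 1)) = LinearMap.ker (d n).rangeRestrict := by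
      rw [LinearMap.ker_rangeRestrict, hd n]
    have hk' : LinearMap.range (e (n + 1)) = LinearMap.ker (e n).rangeRestrict := by
      rw [LinearMap.ker_rangeRestrict, he n]
    exact aux_step hD (d n).rangeRestrict (LinearMap.surjective_rangeRestrict _) (hflat _) (hrefl _)
      (aux_coker hD (d (n + 1)) _ (LinearMap.surjective_rangeRestrict _) hk (hrefl _) (hrefl _))
      (e n).rangeRestrict (hec n) s r hrs _ hk _ hk'
  have hall : ∀ n, IsMatlisReflexive R (⨁ 𝔫, En 𝔫) (G n) ∧
      ∃ (s' : LinearMap.range (e n) →ₗ[R] LinearMap.range (d n))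
        (r' : LinearMap.range (d n) →ₗ[R] LinearMap.range (e n)),
        Function.Bijective (r' ∘ₗ s') := by
    intro n
    induction n with
    | zero => exact h0
    | succ n ih =>
      obtain ⟨_, s, r, hrs⟩ := ih
      exact hs n s r hrs
  exact fun n => (hall n).1
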